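/- Two PGA-programs X and Y denote the same SPI (are single-pass congruent) if and only if the equation X = Y is derivable in equational logic from the axioms PGA1 ((X;Y);Z = X;(Y;Z)), PGA2 ((X^n)^ω = X^ω for n ≥ 1), PGA3 (X^ω;Y = X^ω) and PGA4 ((X;Y)^ω = X;(Y;X)^ω). -/

import Mathlib

/-- Primitive instructions over a set `A` of basic instructions:
basic instructions `a`, positive tests `+a`, negative tests `-a`,
jump instructions `#k` and the termination instruction `!`. -/
inductive PrimInstr (A : Type) : Type where
  | basic (a : A)
  | pos (a : A)
  | neg (a : A)
  | jump (k : Nat)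
  | halt
deriving DecidableEq

/-- PGA-programs over `A`: primitive instructions, concatenation `X;Y`
and repetition `X^ω`. -/
inductive PGA (A : Type) : Type where
  | prim (u : PrimInstr A)
  | seq (X Y : PGA A)
  | rep (X : PGA A)
deriving DecidableEq

/-- `X.pow n` is the power `X^n` for `n ≥ 1`: `X^1 = X` and `X^(n+1) = X ; X^n`.
(The value at `0` is irrelevant and set to `X`; all statements only use `n ≥ 1`.) -/
def PGA.pow {A : Type} (X : PGA A) : Nat → PGA A
  | 0 => X
  | 1 => X
  | n+2 => X.seq (X.pow (n+1))

/-- A SPI: a nonempty finite (list) or infinite (function) sequence of primitive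
instructions.  (Nonemptiness always holds for denotations of PGA-programs.) -/
abbrev SPI (A : Type) : Type := List (PrimInstr A) ⊕ (ℕ → PrimInstr A)

/-- Concatenation of SPIs; if the first one is infinite, it is the result. -/
def SPI.seqc {A : Type} : SPI A → SPI A → SPI A
  | .inl l, .inl l' => .inl (l ++ l')
  | .inl l, .inr s => .inr fun n => if h : n < l.length then l.get ⟨n, h⟩ else s (n - l.length)
  | .inr s, _ => .inr s

/-- Infinite repetition of a SPI; an infinite SPI is its own repetition.
(The `getD`-default is never relevant: SPIs of PGA-programs are nonempty.) -/
def SPI.omega {A : Type} : SPI A → SPI A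
  | .inl l => .inr fun n => l.getD (n % l.length) .halt
  | .inr s => .inr s

/-- The SPI denoted by a PGA-program. -/
def PGA.spi {A : Type} : PGA A → SPI A
  | .prim u => .inl [u]
  | .seq X Y => X.spi.seqc Y.spi
  | .rep X => X.spi.omega

/-- Equational-logic derivability from the axioms PGA1-PGA4 of program algebra. -/
inductive DerivPGA {A : Type} : PGA A → PGA A → Prop
  | refl (X : PGA A) : DerivPGA X X
  | symm {X Y : PGA A} : DerivPGA X Y → DerivPGA Y X
  | trans {X Y Z : PGA A} : DerivPGA X Y → DerivPGA Y Z → DerivPGA X Z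
  | seq_congr {X X' Y Y' : PGA A} : DerivPGA X X' → DerivPGA Y Y' → DerivPGA (X.seq Y) (X'.seq Y')
  | rep_congr {X Y : PGA A} : DerivPGA X Y → DerivPGA X.rep Y.rep
  | pga1 (X Y Z : PGA A) : DerivPGA ((X.seq Y).seq Z) (X.seq (Y.seq Z))
  | pga2 (X : PGA A) (n : ℕ) (hn : 1 ≤ n) : DerivPGA ((X.pow n).rep) X.rep
  | pga3 (X Y : PGA A) : DerivPGA (X.rep.seq Y) X.rep
  | pga4 (X Y : PGA A) : DerivPGA ((X.seq Y).rep) (X.seq ((Y.seq X).rep))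

/-!
Soundness rests on one fact: for a nonempty sequence `a`, the repetition `a^ω` is the unique
solution of `a; x = x`.

For completeness, every program is provably equal to a finite one `u₁; …; uₙ` or to `l; m^ω` with
`l` and `m` finite. Two programs of the latter form can be given prefixes of the same length (by
PGA4, which moves an initial segment of the period into the prefix) and periods of the same length
(by PGA2). Once these lengths agree, equal SPIs force equal prefixes and equal periods.
-/

namespace SPI

open Stream'

variable {A : Type}

theorem inl_seqc_inr (l : List (PrimInstr A)) (s : ℕ → PrimInstr A) :
    seqc (.inl l) (.inr s) = .inr (l ++ₛ s) := by
  refine congrArg Sum.inr (funext fun n => ?_)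
  by_cases h : n < l.length
  · exact (dif_pos h).trans (get_append_left n l s h).symm
  · obtain ⟨k, rfl⟩ := Nat.exists_eq_add_of_le (not_lt.1 h)
    simpa [Stream'.get] using (get_append_right k l s).symm

theorem seqc_assoc (a b c : SPI A) : (a.seqc b).seqc c = a.seqc (b.seqc c) := by
  rcases a with l | s
  · rcases b with m | t
    · rcases c with k | u
      · exact congrArg Sum.inl (List.append_assoc l m k)
      · calc seqc (.inl (l ++ m)) (.inr u)
            = .inr (l ++ m ++ₛ u) := inl_seqc_inr (l ++ m) u
          _ = .inr (l ++ₛ (m ++ₛ u)) := congrArg Sum.inr (append_append_stream l m u)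
          _ = seqc (.inl l) (.inr (m ++ₛ u)) := (inl_seqc_inr l (m ++ₛ u)).symm
          _ = seqc (.inl l) (seqc (.inl m) (.inr u)) :=
            congrArg (seqc (.inl l)) (inl_seqc_inr m u).symm
    · rfl
  · rfl

theorem seqc_ne_nil {a : SPI A} (ha : a ≠ .inl []) (b : SPI A) : a.seqc b ≠ .inl [] := by
  rcases a with l | s <;> rcases b with m | t <;> simp_all [seqc]

theorem seqc_inl_inj {l m : List (PrimInstr A)} {a b : SPI A} (hlen : l.length = m.length)
    (h : seqc (.inl l) a = seqc (.inl m) b) : l = m ∧ a = b := by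
  rcases a with k | s <;> rcases b with k' | t
  · obtain ⟨rfl, rfl⟩ := List.append_inj (Sum.inl.inj h) hlen
    exact ⟨rfl, rfl⟩
  · cases h
  · cases h
  · simp only [inl_seqc_inr] at h
    obtain rfl := append_left_injective l m s t (Sum.inr.inj h) hlen
    exact ⟨rfl, congrArg Sum.inr (append_right_injective l s t (Sum.inr.inj h))⟩

theorem omega_seqc (a b : SPI A) : a.omega.seqc b = a.omega := by
  cases a <;> rfl

theorem seqc_omega (a : SPI A) : a.seqc a.omega = a.omega := by
  rcases a with l | s
  · refine congrArg Sum.inr (funext fun n => ?_)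
    by_cases h : n < l.length
    · simp [h, Nat.mod_eq_of_lt h]
    · simp [h, ← Nat.mod_eq_sub_mod (not_lt.1 h)]
  · rfl

theorem eq_omega_of_seqc_eq {a x : SPI A} (ha : a ≠ .inl []) (hx : a.seqc x = x) :
    x = a.omega := by
  rcases a with l | s
  · have hl : 0 < l.length := List.length_pos_iff.2 fun h => ha (congrArg Sum.inl h)
    rcases x with m | s
    · have hlen := congrArg List.length (Sum.inl.inj hx)
      rw [List.length_append] at hlen
      omega
    · refine congrArg Sum.inr (funext fun n => ?_)
      induction n using Nat.strong_induction_on with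
      | _ n ih =>
        have hn := congrFun (Sum.inr.inj hx) n
        by_cases h : n < l.length
        · simpa [h, Nat.mod_eq_of_lt h] using hn.symm
        · rw [dif_neg h, ih _ (by omega), ← Nat.mod_eq_sub_mod (not_lt.1 h)] at hn
          exact hn.symm
  · exact hx.symm

theorem omega_seqc_comm {a : SPI A} (ha : a ≠ .inl []) (b : SPI A) :
    (a.seqc b).omega = a.seqc (b.seqc a).omega := by
  refine (eq_omega_of_seqc_eq (seqc_ne_nil ha b) ?_).symm
  calc (a.seqc b).seqc (a.seqc (b.seqc a).omega)
      = a.seqc ((b.seqc a).seqc (b.seqc a).omega) := by simp only [seqc_assoc]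
    _ = a.seqc (b.seqc a).omega := by rw [seqc_omega]

end SPI

namespace PGA

variable {A : Type}

theorem spi_ne_nil (X : PGA A) : X.spi ≠ .inl [] := by
  induction X with
  | prim u => exact fun h => List.cons_ne_nil u [] (Sum.inl.inj h)
  | seq X Y ihX _ => exact SPI.seqc_ne_nil ihX Y.spi
  | rep X _ => rcases hX : X.spi <;> simp [spi, hX, SPI.omega]

theorem spi_pow_seqc_spi_rep (X : PGA A) : ∀ n, (X.pow n).spi.seqc X.rep.spi = X.rep.spi
  | 0 | 1 => SPI.seqc_omega X.spi
  | n + 2 => by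
    rw [pow, spi, SPI.seqc_assoc, spi_pow_seqc_spi_rep X (n + 1)]
    exact SPI.seqc_omega X.spi

theorem spi_rep_pow (X : PGA A) (n : ℕ) : (X.pow n).rep.spi = X.rep.spi :=
  (SPI.eq_omega_of_seqc_eq (X.pow n).spi_ne_nil (spi_pow_seqc_spi_rep X n)).symm

/-- The repetition-free program `u₁; …; uₙ` of a nonempty list of primitive instructions.
As PGA has no empty program, the value at `[]` is a junk value. -/
def ofList : List (PrimInstr A) → PGA A
  | [] => .prim .halt
  | [u] => .prim u
  | u :: v :: l => (prim u).seq (ofList (v :: l))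

/-- The program `l; m^ω`, a (nonunique) normal form of the programs with an infinite SPI: the prefix
`l` is the tail of the lasso and the period `m` its loop. -/
def lasso (l m : List (PrimInstr A)) : PGA A :=
  (ofList l).seq (ofList m).rep

theorem spi_ofList : ∀ {l : List (PrimInstr A)}, l ≠ [] → (ofList l).spi = .inl l
  | [_], _ => rfl
  | u :: v :: l, _ => by rw [ofList, spi, spi_ofList (List.cons_ne_nil v l)]; rfl

theorem spi_lasso {l m : List (PrimInstr A)} (hl : l ≠ []) (hm : m ≠ []) :
    (lasso l m).spi = SPI.seqc (.inl l) (SPI.omega (.inl m)) := by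
  rw [lasso, spi, spi, spi_ofList hl, spi_ofList hm]

theorem spi_ofList_ne_spi_lasso {k l m : List (PrimInstr A)} (hk : k ≠ []) (hl : l ≠ [])
    (hm : m ≠ []) : (ofList k).spi ≠ (lasso l m).spi := by
  rw [spi_ofList hk, spi_lasso hl hm]
  exact Sum.inl_ne_inr

theorem eq_of_spi_lasso_eq {l m l' m' : List (PrimInstr A)} (hl : l ≠ []) (hm : m ≠ [])
    (hl' : l' ≠ []) (hm' : m' ≠ []) (hll' : l.length = l'.length) (hmm' : m.length = m'.length)
    (h : (lasso l m).spi = (lasso l' m').spi) : l = l' ∧ m = m' := by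
  rw [spi_lasso hl hm, spi_lasso hl' hm'] at h
  obtain ⟨hl_eq, homega⟩ := SPI.seqc_inl_inj hll' h
  rw [← SPI.seqc_omega (.inl m), ← SPI.seqc_omega (.inl m')] at homega
  exact ⟨hl_eq, (SPI.seqc_inl_inj hmm' homega).1⟩

end PGA

namespace DerivPGA

open PGA

variable {A : Type}

theorem spi_eq {X Y : PGA A} (h : DerivPGA X Y) : X.spi = Y.spi := by
  induction h with
  | refl => rfl
  | symm _ ih => exact ih.symm
  | trans _ _ ihXY ihYZ => exact ihXY.trans ihYZ
  | seq_congr _ _ ihX ihY => exact congrArg₂ SPI.seqc ihX ihY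
  | rep_congr _ ih => exact congrArg SPI.omega ih
  | pga1 X Y Z => exact SPI.seqc_assoc X.spi Y.spi Z.spi
  | pga2 X n _ => exact spi_rep_pow X n
  | pga3 X Y => exact SPI.omega_seqc X.spi Y.spi
  | pga4 X Y => exact SPI.omega_seqc_comm X.spi_ne_nil Y.spi

instance : Trans (DerivPGA (A := A)) DerivPGA DerivPGA := ⟨.trans⟩

theorem seq_left {X X' : PGA A} (h : DerivPGA X X') (Y : PGA A) :
    DerivPGA (X.seq Y) (X'.seq Y) :=
  seq_congr h (refl Y)

theorem seq_right (X : PGA A) {Y Y' : PGA A} (h : DerivPGA Y Y') :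
    DerivPGA (X.seq Y) (X.seq Y') :=
  seq_congr (refl X) h

theorem rep_unfold (X : PGA A) : DerivPGA X.rep (X.seq X.rep) :=
  have rep_square : DerivPGA (X.seq X).rep X.rep := pga2 X 2 one_le_two
  calc
    DerivPGA X.rep (X.seq X).rep := rep_square.symm
    DerivPGA _ (X.seq (X.seq X).rep) := pga4 X X
    DerivPGA _ (X.seq X.rep) := seq_right X rep_square

theorem rep_rep (X : PGA A) : DerivPGA X.rep.rep X.rep :=
  (rep_unfold X.rep).trans (pga3 X X.rep.rep)

theorem rep_seq_rep (X Y : PGA A) : DerivPGA (X.seq Y.rep).rep (X.seq Y.rep) :=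
  calc
    DerivPGA (X.seq Y.rep).rep (X.seq (Y.rep.seq X).rep) := pga4 X Y.rep
    DerivPGA _ (X.seq Y.rep.rep) := seq_right X (rep_congr (pga3 Y X))
    DerivPGA _ (X.seq Y.rep) := seq_right X (rep_rep Y)

theorem ofList_append : ∀ {l m : List (PrimInstr A)}, l ≠ [] → m ≠ [] →
    DerivPGA (ofList (l ++ m)) ((ofList l).seq (ofList m))
  | [_], _ :: _, _, _ => refl _
  | u :: v :: l, _, _, hm =>
    (seq_right (prim u) (ofList_append (List.cons_ne_nil v l) hm)).trans (pga1 _ _ _).symm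

theorem ofList_seq_lasso {k l : List (PrimInstr A)} (hk : k ≠ []) (hl : l ≠ [])
    (m : List (PrimInstr A)) : DerivPGA ((ofList k).seq (lasso l m)) (lasso (k ++ l) m) :=
  (pga1 _ _ _).symm.trans (seq_left (ofList_append hk hl).symm _)

theorem ofList_flatten_replicate {m : List (PrimInstr A)} (hm : m ≠ []) {n : ℕ} (hn : 1 ≤ n) :
    DerivPGA (ofList (List.replicate n m).flatten) ((ofList m).pow n) := by
  induction n, hn using Nat.le_induction with
  | base => simpa [pow] using refl (ofList m)
  | succ n hn ih =>
    obtain ⟨n, rfl⟩ := Nat.exists_eq_add_of_le' hn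
    rw [List.replicate_succ, List.flatten_cons]
    exact (ofList_append hm (by simp [List.replicate_succ, hm])).trans (seq_right _ ih)

theorem lasso_flatten_replicate (l : List (PrimInstr A)) {m : List (PrimInstr A)} (hm : m ≠ [])
    {n : ℕ} (hn : 1 ≤ n) : DerivPGA (lasso l m) (lasso l (List.replicate n m).flatten) :=
  seq_right _ <| (pga2 (ofList m) n hn).symm.trans
    (rep_congr (ofList_flatten_replicate hm hn)).symm

theorem lasso_append {l m₁ m₂ : List (PrimInstr A)} (hl : l ≠ []) (hm₁ : m₁ ≠ [])
    (hm₂ : m₂ ≠ []) : DerivPGA (lasso l (m₁ ++ m₂)) (lasso (l ++ m₁) (m₂ ++ m₁)) :=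
  have rotate : DerivPGA (ofList (m₁ ++ m₂)).rep (lasso m₁ (m₂ ++ m₁)) :=
    calc
      DerivPGA _ ((ofList m₁).seq (ofList m₂)).rep := rep_congr (ofList_append hm₁ hm₂)
      DerivPGA _ ((ofList m₁).seq ((ofList m₂).seq (ofList m₁)).rep) := pga4 _ _
      DerivPGA _ (lasso m₁ (m₂ ++ m₁)) :=
        seq_right _ (rep_congr (ofList_append hm₂ hm₁).symm)
  (seq_right _ rotate).trans (ofList_seq_lasso hl hm₁ _)

theorem exists_lasso_length_eq {l m : List (PrimInstr A)} (hl : l ≠ []) (hm : m ≠ []) {k n : ℕ}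
    (hk : 0 < k) (hkn : k < n) :
    ∃ l' m', l' ≠ [] ∧ m' ≠ [] ∧ l'.length = l.length + k ∧ m'.length = n * m.length ∧
      DerivPGA (lasso l m) (lasso l' m') := by
  set p := (List.replicate n m).flatten with hp
  have p_length : p.length = n * m.length := by simp [hp]
  have k_lt : k < p.length :=
    p_length ▸ hkn.trans_le (Nat.le_mul_of_pos_right n (List.length_pos_iff.2 hm))
  have take_ne : p.take k ≠ [] := List.length_pos_iff.1 (by rw [List.length_take]; omega)
  have drop_ne : p.drop k ≠ [] := List.length_pos_iff.1 (by rw [List.length_drop]; omega)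
  refine ⟨l ++ p.take k, p.drop k ++ p.take k, by simp [hl], by simp [drop_ne], ?_, ?_, ?_⟩
  · rw [List.length_append, List.length_take_of_le k_lt.le]
  · rw [List.length_append, Nat.add_comm, ← List.length_append, List.take_append_drop, p_length]
  · have shift := lasso_append hl take_ne drop_ne
    rw [List.take_append_drop] at shift
    exact (lasso_flatten_replicate l hm (by omega)).trans shift

theorem lasso_of_spi_eq {l m l' m' : List (PrimInstr A)} (hl : l ≠ []) (hm : m ≠ [])
    (hl' : l' ≠ []) (hm' : m' ≠ []) (h : (lasso l m).spi = (lasso l' m').spi) :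
    DerivPGA (lasso l m) (lasso l' m') := by
  have l_pos := List.length_pos_iff.2 hl
  have l'_pos := List.length_pos_iff.2 hl'
  have m_pos := List.length_pos_iff.2 hm
  have m'_pos := List.length_pos_iff.2 hm'
  let N := l.length + l'.length + 1
  have l_lt : l.length < N := by lia
  have l'_lt : l'.length < N := by lia
  obtain ⟨k, p, hk, hp, k_length, p_length, resize⟩ :=
    exists_lasso_length_eq hl hm l'_pos (l'_lt.trans_le (Nat.le_mul_of_pos_right N m'_pos))
  obtain ⟨k', p', hk', hp', k'_length, p'_length, resize'⟩ :=
    exists_lasso_length_eq hl' hm' l_pos (l_lt.trans_le (Nat.le_mul_of_pos_right N m_pos))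
  obtain ⟨rfl, rfl⟩ := eq_of_spi_lasso_eq hk hp hk' hp'
    (by rw [k_length, k'_length, Nat.add_comm])
    (by rw [p_length, p'_length, Nat.mul_right_comm])
    (resize.spi_eq.symm.trans (h.trans resize'.spi_eq))
  exact resize.trans resize'.symm

theorem exists_normalForm (X : PGA A) :
    (∃ l, l ≠ [] ∧ DerivPGA X (ofList l)) ∨
      ∃ l m, l ≠ [] ∧ m ≠ [] ∧ DerivPGA X (lasso l m) := by
  induction X with
  | prim u => exact .inl ⟨[u], List.cons_ne_nil u [], refl _⟩
  | seq X Y ihX ihY =>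
    rcases ihX with ⟨l, hl, hX⟩ | ⟨l, m, hl, hm, hX⟩
    · rcases ihY with ⟨k, hk, hY⟩ | ⟨k, m, hk, hm, hY⟩
      · exact .inl ⟨l ++ k, by simp [hl],
          (seq_congr hX hY).trans (ofList_append hl hk).symm⟩
      · exact .inr ⟨l ++ k, m, by simp [hl], hm,
          (seq_congr hX hY).trans (ofList_seq_lasso hl hk m)⟩
    · refine .inr ⟨l, m, hl, hm, ?_⟩
      calc
        DerivPGA (X.seq Y) ((lasso l m).seq Y) := seq_left hX Y
        DerivPGA _ ((ofList l).seq ((ofList m).rep.seq Y)) := pga1 _ _ _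
        DerivPGA _ (lasso l m) := seq_right _ (pga3 _ _)
  | rep X ih =>
    rcases ih with ⟨l, hl, hX⟩ | ⟨l, m, hl, hm, hX⟩
    · exact .inr ⟨l, l, hl, hl, (rep_congr hX).trans (rep_unfold _)⟩
    · exact .inr ⟨l, m, hl, hm, (rep_congr hX).trans (rep_seq_rep _ _)⟩

theorem of_spi_eq {X Y : PGA A} (h : X.spi = Y.spi) : DerivPGA X Y := by
  rcases exists_normalForm X with ⟨l, hl, hX⟩ | ⟨l, m, hl, hm, hX⟩ <;>
    rcases exists_normalForm Y with ⟨l', hl', hY⟩ | ⟨l', m', hl', hm', hY⟩ <;>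
    rw [hX.spi_eq, hY.spi_eq] at h
  · rw [spi_ofList hl, spi_ofList hl'] at h
    obtain rfl := Sum.inl.inj h
    exact hX.trans hY.symm
  · exact absurd h (spi_ofList_ne_spi_lasso hl hl' hm')
  · exact absurd h.symm (spi_ofList_ne_spi_lasso hl' hl hm)
  · exact hX.trans ((lasso_of_spi_eq hl hm hl' hm' h).trans hY.symm)

end DerivPGA

/-- Soundness and completeness of PGA1-PGA4 for single-pass congruence:
two PGA-programs denote the same SPI iff their equality is derivable in
equational logic from PGA1-PGA4. -/
theorem single_pass_congruence_axiomatized (A : Type) (X Y : PGA A) :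
    X.spi = Y.spi ↔ DerivPGA X Y :=
  ⟨DerivPGA.of_spi_eq, DerivPGA.spi_eq⟩
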